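/- Let N ≥ 2 and let Ω ⊂ ℝ^N be an open set with finite N-dimensional Lebesgue measure. Let v : Ω → ℝ^N be a continuous vector field with |v(x)| ≤ Λ for all x ∈ Ω, for some finite constant Λ. Then for all positive real numbers η, ε, ϑ there exist a compact set K ⊂ Ω and a function φ ∈ C¹₀(Ω) such that ℋ^N(Ω ∖ K) ≤ ε·ℋ^N(Ω), sup_{x ∈ Ω} |φ(x)| ≤ ϑ, and |v(x) − ∇φ(x)| ≤ η for every x ∈ K. -/

import Mathlib

open MeasureTheory Filter

noncomputable section

/-- Euclidean space `ℝ^N`. -/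
abbrev Euc (N : ℕ) := EuclideanSpace ℝ (Fin N)

/-- `φ ∈ C¹₀(Ω)`: the class of `C¹` functions on `Ω` which, together with their gradient,
tend to `0` at the boundary of `Ω` (and at infinity); equivalently, the extension of `φ`
by zero outside `Ω` is `C¹` on all of `ℝ^N`, vanishes together with its derivative
outside `Ω`, and `φ` and `∇φ` vanish at infinity. -/
def MemC1Zero {N : ℕ} (Ω : Set (Euc N)) (φ : Euc N → ℝ) : Prop :=
  ContDiff ℝ 1 φ ∧ (∀ x ∉ Ω, φ x = 0 ∧ fderiv ℝ φ x = 0) ∧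
  Tendsto (fun x => |φ x| + ‖fderiv ℝ φ x‖) (cocompact (Euc N)) (nhds 0)

/-!
Near a point `a` of `Ω` the affine function `x ↦ A a (x - a)` has derivative close to `A` and
is itself small, because it vanishes at `a`. Such local solutions can be added one at a time: given
a function that is already good on a compact set `K`, and a neighbourhood `U` on which an affine
function is good, choose a compact set `L ⊆ U \ K` filling `U \ K` up to small measure, and
interpolate between the two functions by a cutoff that is `1` near `L` and supported in `U \ K`.
The size of the derivative in the transition region is irrelevant, since this region is discarded.
Finitely many neighbourhoods suffice, as a compact subset of `Ω` fills `Ω` up to small measure.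
-/

open Set Topology
open scoped ContDiff ENNReal Manifold

section RoughApproximation

variable {E F : Type*} [NormedAddCommGroup E] [NormedSpace ℝ E]
  [NormedAddCommGroup F] [NormedSpace ℝ F]

theorem exists_contDiff_eventuallyEq_of_isCompact [FiniteDimensional ℝ E] {L U : Set E}
    (hL : IsCompact L) (hU : IsOpen U) (hLU : L ⊆ U) {φ g : E → F} (hφ : ContDiff ℝ ∞ φ)
    (hg : ContDiff ℝ ∞ g) :
    ∃ (ψ : E → F) (T : Set E), ContDiff ℝ ∞ ψ ∧ IsCompact T ∧ T ⊆ U ∧ EqOn ψ φ Tᶜ ∧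
      (∀ᶠ x in 𝓝ˢ L, ψ x = g x) ∧ ∀ x, ψ x ∈ segment ℝ (φ x) (g x) := by
  obtain ⟨T, hT, hLT, hTU⟩ := exists_compact_between hL hU hLU
  obtain ⟨χ, hχ_one, hχ_zero, hχ⟩ :=
    exists_contMDiffMap_one_nhds_of_subset_interior (n := ⊤) 𝓘(ℝ, E) hL.isClosed hLT
  have hχ_smooth : ContDiff ℝ ∞ χ := χ.contMDiff.contDiff
  refine ⟨fun x => (1 - χ x) • φ x + χ x • g x, T,
    ((contDiff_const.sub hχ_smooth).smul hφ).add (hχ_smooth.smul hg), hT, hTU,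
    fun x hx => ?_, ?_, fun x => ?_⟩
  · simp [hχ_zero x hx]
  · filter_upwards [hχ_one] with x hx
    simp [hx]
  · exact ⟨1 - χ x, χ x, sub_nonneg.2 (hχ x).2, (hχ x).1, sub_add_cancel _ _, rfl⟩

theorem exists_isOpen_contDiff_norm_sub_fderiv_le {Ω : Set E} {A : E → E →L[ℝ] F} {η ϑ : ℝ} {a : E}
    (hΩ : IsOpen Ω) (hA : ContinuousOn A Ω) (ha : a ∈ Ω) (hη : 0 < η) (hϑ : 0 < ϑ) :
    ∃ U ⊆ Ω, IsOpen U ∧ a ∈ U ∧ ∃ g : E → F, ContDiff ℝ ∞ g ∧ (∀ x ∈ U, ‖g x‖ ≤ ϑ) ∧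
      ∀ x ∈ U, ‖A x - fderiv ℝ g x‖ ≤ η := by
  have hg : ContDiff ℝ ∞ fun x => A a (x - a) :=
    (A a).contDiff.comp (contDiff_id.sub contDiff_const)
  have hg_fderiv (x : E) : fderiv ℝ (fun x => A a (x - a)) x = A a :=
    ((A a).hasFDerivAt.comp x ((hasFDerivAt_id x).sub_const a)).fderiv
  have hg_near : ∀ᶠ x in 𝓝 a, ‖A a (x - a)‖ < ϑ :=
    hg.continuous.norm.continuousAt.eventually_lt_const (by simpa using hϑ)
  have hA_near : ∀ᶠ x in 𝓝 a, ‖A x - A a‖ < η :=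
    ((hA.continuousAt (hΩ.mem_nhds ha)).sub_const (A a)).norm.eventually_lt_const
      (by simpa using hη)
  obtain ⟨U, hU, hU_open, haU⟩ :=
    eventually_nhds_iff.1 ((hΩ.eventually_mem ha).and (hg_near.and hA_near))
  exact ⟨U, fun x hx => (hU x hx).1, hU_open, haU, _, hg, fun x hx => (hU x hx).2.1.le,
    fun x hx => by rw [hg_fderiv]; exact (hU x hx).2.2.le⟩

/-- `φ` is a smooth function with compact support in `Ω`, bounded by `ϑ`, whose derivative is within
`η` of the field `A` on the compact set `K ⊆ Ω`. Nothing is required of the derivative of `φ` off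
`K`, so that such pairs `(K, φ)` can be enlarged step by step. -/
structure IsRoughApproximation (Ω : Set E) (A : E → E →L[ℝ] F) (η ϑ : ℝ) (K : Set E)
    (φ : E → F) : Prop where
  isCompact : IsCompact K
  subset : K ⊆ Ω
  contDiff : ContDiff ℝ ∞ φ
  hasCompactSupport : HasCompactSupport φ
  tsupport_subset : tsupport φ ⊆ Ω
  norm_le : ∀ x, ‖φ x‖ ≤ ϑ
  norm_sub_fderiv_le : ∀ x ∈ K, ‖A x - fderiv ℝ φ x‖ ≤ η

namespace IsRoughApproximation

variable {Ω K L U S : Set E} {A : E → E →L[ℝ] F} {η ϑ : ℝ} {φ g : E → F}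

theorem empty_zero (hϑ : 0 ≤ ϑ) : IsRoughApproximation Ω A η ϑ ∅ 0 where
  isCompact := isCompact_empty
  subset := empty_subset Ω
  contDiff := contDiff_const
  hasCompactSupport := HasCompactSupport.zero
  tsupport_subset := by simp [tsupport]
  norm_le := by simpa using hϑ
  norm_sub_fderiv_le := by simp

theorem exists_union [FiniteDimensional ℝ E] (hφ : IsRoughApproximation Ω A η ϑ K φ)
    (hU : IsOpen U) (hUΩ : U ⊆ Ω) (hg : ContDiff ℝ ∞ g) (hg_le : ∀ x ∈ U, ‖g x‖ ≤ ϑ)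
    (hg_fderiv : ∀ x ∈ U, ‖A x - fderiv ℝ g x‖ ≤ η) (hL : IsCompact L) (hLU : L ⊆ U \ K) :
    ∃ ψ, IsRoughApproximation Ω A η ϑ (K ∪ L) ψ := by
  obtain ⟨ψ, T, hψ, hT, hTU, hψφ, hψg, hψ_seg⟩ := exists_contDiff_eventuallyEq_of_isCompact
    hL (hU.sdiff hφ.isCompact.isClosed) hLU hφ.contDiff hg
  have hψ_zero : ∀ x ∉ tsupport φ ∪ T, ψ x = 0 := fun x hx =>
    (hψφ fun hxT => hx (.inr hxT)).trans (image_eq_zero_of_notMem_tsupport fun h => hx (.inl h))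
  have hsupp : IsCompact (tsupport φ ∪ T) := hφ.hasCompactSupport.isCompact.union hT
  refine ⟨ψ, hφ.isCompact.union hL, union_subset hφ.subset (hLU.trans (sdiff_subset.trans hUΩ)), hψ,
    .intro hsupp hψ_zero, ?_, fun x => ?_, ?_⟩
  · exact (closure_minimal (Function.support_subset_iff'.2 hψ_zero) hsupp.isClosed).trans
      (union_subset hφ.tsupport_subset (hTU.trans (sdiff_subset.trans hUΩ)))
  · by_cases hxT : x ∈ T
    · have hsub := (convex_closedBall (0 : F) ϑ).segment_subset
        (mem_closedBall_zero_iff.2 (hφ.norm_le x)) (mem_closedBall_zero_iff.2 (hg_le x (hTU hxT).1))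
      exact mem_closedBall_zero_iff.1 (hsub (hψ_seg x))
    · exact (congrArg norm (hψφ hxT)).trans_le (hφ.norm_le x)
  · rintro x (hxK | hxL)
    · have heq : ψ =ᶠ[𝓝 x] φ :=
        hψφ.eventuallyEq_of_mem (hT.isClosed.isOpen_compl.mem_nhds fun hxT => (hTU hxT).2 hxK)
      simpa only [heq.fderiv_eq] using hφ.norm_sub_fderiv_le x hxK
    · have heq : ψ =ᶠ[𝓝 x] g := hψg.filter_mono (nhds_le_nhdsSet hxL)
      simpa only [heq.fderiv_eq] using hg_fderiv x (hLU hxL).1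

variable [FiniteDimensional ℝ E] [MeasurableSpace E] [OpensMeasurableSpace E] {μ : Measure E}
  [μ.InnerRegularCompactLTTop] {δ : ℝ≥0∞}

theorem exists_superset_measure_diff_le (hφ : IsRoughApproximation Ω A η ϑ K φ)
    (hU : IsOpen U) (hUΩ : U ⊆ Ω) (hμU : μ U ≠ ⊤) (hg : ContDiff ℝ ∞ g)
    (hg_le : ∀ x ∈ U, ‖g x‖ ≤ ϑ) (hg_fderiv : ∀ x ∈ U, ‖A x - fderiv ℝ g x‖ ≤ η) (hδ : δ ≠ 0) :
    ∃ K' ψ, K ⊆ K' ∧ IsRoughApproximation Ω A η ϑ K' ψ ∧ μ (U \ K') ≤ δ := by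
  obtain ⟨L, hLU, hL, hμL⟩ :=
    (hU.sdiff hφ.isCompact.isClosed).measurableSet.exists_isCompact_sdiff_lt
      (ne_top_of_le_ne_top hμU (measure_mono sdiff_subset)) hδ
  obtain ⟨ψ, hψ⟩ := hφ.exists_union hU hUΩ hg hg_le hg_fderiv hL hLU
  exact ⟨K ∪ L, ψ, subset_union_left, hψ, by rw [← sdiff_sdiff]; exact hμL.le⟩

theorem exists_superset_measure_diff_le_of_isCompact (hΩ : IsOpen Ω) (hμΩ : μ Ω ≠ ⊤)
    (hA : ContinuousOn A Ω) (hη : 0 < η) (hϑ : 0 < ϑ) (hS : IsCompact S) (hSΩ : S ⊆ Ω) :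
    ∀ ⦃K : Set E⦄ ⦃φ : E → F⦄ ⦃δ : ℝ≥0∞⦄, IsRoughApproximation Ω A η ϑ K φ → δ ≠ 0 →
      ∃ K' ψ, K ⊆ K' ∧ IsRoughApproximation Ω A η ϑ K' ψ ∧ μ (S \ K') ≤ δ := by
  refine hS.induction_on (fun K φ δ hφ _ => ⟨K, φ, Subset.rfl, hφ, by simp⟩) ?_ ?_ ?_
  · intro S T hST hT K φ δ hφ hδ
    obtain ⟨K', ψ, hKK', hψ, hμ⟩ := hT hφ hδ
    exact ⟨K', ψ, hKK', hψ, (measure_mono (sdiff_subset_sdiff_left hST)).trans hμ⟩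
  · intro S T hS hT K φ δ hφ hδ
    have hδ2 : δ / 2 ≠ 0 := (ENNReal.half_pos hδ).ne'
    obtain ⟨K₁, φ₁, hKK₁, hφ₁, hμ₁⟩ := hS hφ hδ2
    obtain ⟨K₂, φ₂, hK₁K₂, hφ₂, hμ₂⟩ := hT hφ₁ hδ2
    refine ⟨K₂, φ₂, hKK₁.trans hK₁K₂, hφ₂, ?_⟩
    calc μ ((S ∪ T) \ K₂) ≤ μ (S \ K₂) + μ (T \ K₂) := by
          rw [union_sdiff_distrib]; exact measure_union_le _ _
      _ ≤ δ / 2 + δ / 2 := by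
          gcongr
          exact (measure_mono (sdiff_subset_sdiff_right hK₁K₂)).trans hμ₁
      _ = δ := ENNReal.add_halves δ
  · intro x hx
    obtain ⟨U, hUΩ, hU, hxU, g, hg, hg_le, hg_fderiv⟩ :=
      exists_isOpen_contDiff_norm_sub_fderiv_le hΩ hA (hSΩ hx) hη hϑ
    exact ⟨U, mem_nhdsWithin_of_mem_nhds (hU.mem_nhds hxU), fun K φ δ hφ hδ =>
      hφ.exists_superset_measure_diff_le hU hUΩ (ne_top_of_le_ne_top hμΩ (measure_mono hUΩ))
        hg hg_le hg_fderiv hδ⟩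

end IsRoughApproximation

theorem exists_isRoughApproximation_measure_diff_le [FiniteDimensional ℝ E] [MeasurableSpace E]
    [OpensMeasurableSpace E] {μ : Measure E} [μ.InnerRegularCompactLTTop] {Ω : Set E}
    {A : E → E →L[ℝ] F} {η ϑ : ℝ} {δ : ℝ≥0∞} (hΩ : IsOpen Ω) (hμΩ : μ Ω ≠ ⊤)
    (hA : ContinuousOn A Ω) (hη : 0 < η) (hϑ : 0 < ϑ) (hδ : δ ≠ 0) :
    ∃ K φ, IsRoughApproximation Ω A η ϑ K φ ∧ μ (Ω \ K) ≤ δ := by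
  have hδ2 : δ / 2 ≠ 0 := (ENNReal.half_pos hδ).ne'
  obtain ⟨S, hSΩ, hS, hμS⟩ := hΩ.measurableSet.exists_isCompact_sdiff_lt hμΩ hδ2
  obtain ⟨K, φ, -, hφ, hμK⟩ :=
    IsRoughApproximation.exists_superset_measure_diff_le_of_isCompact hΩ hμΩ hA hη hϑ hS hSΩ
      (.empty_zero hϑ.le) hδ2
  refine ⟨K, φ, hφ, ?_⟩
  calc μ (Ω \ K) ≤ μ (Ω \ S) + μ (S \ K) :=
        (measure_mono (sdiff_triangle Ω S K)).trans (measure_union_le _ _)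
    _ ≤ δ / 2 + δ / 2 := add_le_add hμS.le hμK
    _ = δ := ENNReal.add_halves δ

theorem rough_approximation_of_continuous_bounded_general [FiniteDimensional ℝ E]
    [MeasurableSpace E] [BorelSpace E] {μ : Measure E} {Ω : Set E} (hΩ : IsOpen Ω) (hμΩ : μ Ω ≠ ⊤)
    {A : E → E →L[ℝ] F} (hA : ContinuousOn A Ω) {η ϑ : ℝ} {ε : ℝ≥0∞} (hη : 0 < η) (hε : ε ≠ 0)
    (hϑ : 0 < ϑ) :
    ∃ K φ, IsRoughApproximation Ω A η ϑ K φ ∧ μ (Ω \ K) ≤ ε * μ Ω := by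
  rcases eq_or_ne (μ Ω) 0 with hμ_zero | hμ_zero
  · exact ⟨∅, 0, .empty_zero hϑ.le, by simp [hμ_zero]⟩
  have : Fact (μ Ω < ⊤) := ⟨hμΩ.lt_top⟩
  obtain ⟨K, φ, hφ, hμK⟩ := exists_isRoughApproximation_measure_diff_le (μ := μ.restrict Ω) hΩ
    (measure_ne_top _ _) hA hη hϑ (mul_ne_zero hε hμ_zero)
  exact ⟨K, φ, hφ, by rwa [Measure.restrict_eq_self μ sdiff_subset] at hμK⟩

end RoughApproximation

theorem norm_toDual_sub_fderiv {H : Type*} [NormedAddCommGroup H] [InnerProductSpace ℝ H]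
    [CompleteSpace H] (φ : H → ℝ) (w x : H) :
    ‖InnerProductSpace.toDual ℝ H w - fderiv ℝ φ x‖ = ‖w - gradient φ x‖ := by
  rw [← toDual_gradient, ← map_sub, LinearIsometryEquiv.norm_map]

theorem MemC1Zero.of_hasCompactSupport {N : ℕ} {Ω : Set (Euc N)} {φ : Euc N → ℝ}
    (hφ : ContDiff ℝ 1 φ) (hc : HasCompactSupport φ) (hs : tsupport φ ⊆ Ω) : MemC1Zero Ω φ := by
  have hzero : ∀ x ∉ tsupport φ, φ x = 0 ∧ fderiv ℝ φ x = 0 := fun x hx =>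
    ⟨image_eq_zero_of_notMem_tsupport hx,
      image_eq_zero_of_notMem_tsupport fun h => hx (tsupport_fderiv_subset ℝ h)⟩
  refine ⟨hφ, fun x hx => hzero x fun h => hx (hs h), tendsto_const_nhds.congr' ?_⟩
  filter_upwards [hc.isCompact.compl_mem_cocompact] with x hx
  simp [hzero x hx]

/-- Step 1 reduction: the rough-approximation lemma for continuous, bounded vector
fields. For any open `Ω ⊆ ℝ^N` (`N ≥ 2`) with finite measure, any continuous vector
field `v` on `Ω` with `|v| ≤ Λ` on `Ω`, and any positive `η, ε, ϑ`, there exist a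
compact `K ⊆ Ω` and `φ ∈ C¹₀(Ω)` with `ℋ^N(Ω ∖ K) ≤ ε ℋ^N(Ω)`, `sup_Ω |φ| ≤ ϑ`, and
`|v − ∇φ| ≤ η` on `K`. -/
theorem rough_approximation_of_continuous_bounded (N : ℕ) (hN : 2 ≤ N)
    (Ω : Set (Euc N)) (hΩ : IsOpen Ω) (hfin : μH[N] Ω ≠ ⊤)
    (v : Euc N → Euc N) (hv : ContinuousOn v Ω)
    (Λ : ℝ) (hΛ : ∀ x ∈ Ω, ‖v x‖ ≤ Λ)
    (η ε ϑ : ℝ) (hη : 0 < η) (hε : 0 < ε) (hϑ : 0 < ϑ) :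
    ∃ (K : Set (Euc N)) (φ : Euc N → ℝ), IsCompact K ∧ K ⊆ Ω ∧ MemC1Zero Ω φ ∧
      μH[N] (Ω \ K) ≤ ENNReal.ofReal ε * μH[N] Ω ∧
      (∀ x ∈ Ω, |φ x| ≤ ϑ) ∧
      ∀ x ∈ K, ‖v x - gradient φ x‖ ≤ η := by
  obtain ⟨K, φ, hφ, hμK⟩ := rough_approximation_of_continuous_bounded_general hΩ hfin
    ((InnerProductSpace.toDual ℝ (Euc N)).continuous.comp_continuousOn hv) hη
    (ENNReal.ofReal_pos.2 hε).ne' hϑ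
  exact ⟨K, φ, hφ.isCompact, hφ.subset, .of_hasCompactSupport (hφ.contDiff.of_le (by simp))
    hφ.hasCompactSupport hφ.tsupport_subset, hμK, fun x _ => hφ.norm_le x, fun x hx =>
    (norm_toDual_sub_fderiv φ (v x) x).symm.trans_le (hφ.norm_sub_fderiv_le x hx)⟩
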